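/- arXiv:0712.1208 — 7 statements merged into one kernel-verified Lean document; each statement's English description precedes it below -/
import Mathlib

section
/- Let f, g : (0,∞) → ℝ be standard-type functions and c > 0 a constant such that g(x) ≥ c·(x−1)²/f(x) for all x > 0. Let D = diag(λ₁,…,λₙ) be a diagonal density matrix with all λᵢ > 0, and let A be a self-adjoint n×n complex matrix with Tr(DA) = 0. Then ∑_{i,j} M_g(λᵢ,λⱼ)·|A_{ij}|² ≥ c · ∑_{i,j} ((λᵢ−λⱼ)²/M_f(λᵢ,λⱼ))·|A_{ij}|²; that is, the quantum g-covariance of A dominates c times the quantum f-Fisher-information form evaluated at the commutator [D,A]. -/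
open scoped BigOperators

noncomputable section

/-- A standard-type function: continuous, non-decreasing and concave on `(0,∞)`,
positive, with `f 1 = 1` and the symmetry `f t = t * f (1/t)`. -/
def StandardType (f : ℝ → ℝ) : Prop :=
  ContinuousOn f (Set.Ioi 0) ∧ MonotoneOn f (Set.Ioi 0) ∧
  ConcaveOn ℝ (Set.Ioi 0) f ∧ (∀ t : ℝ, 0 < t → 0 < f t) ∧
  f 1 = 1 ∧ ∀ t : ℝ, 0 < t → f t = t * f (1 / t)

/-- The mean associated to `f`: `M_f(a,b) = b * f (a/b)`. -/
def Mmean (f : ℝ → ℝ) (a b : ℝ) : ℝ := b * f (a / b)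

theorem qCov_ge_c_gamma_commutator
    {n : ℕ} (f g : ℝ → ℝ) (hf : StandardType f) (hg : StandardType g)
    (c : ℝ) (hc : 0 < c)
    (hfg : ∀ x : ℝ, 0 < x → g x ≥ c * (x - 1) ^ 2 / f x)
    (lam : Fin n → ℝ) (hlam : ∀ i, 0 < lam i) (hsum : ∑ i, lam i = 1)
    (A : Matrix (Fin n) (Fin n) ℂ) (hA : A.IsHermitian)
    (htr : ∑ i, (lam i : ℂ) * A i i = 0) :
    ∑ i, ∑ j, Mmean g (lam i) (lam j) * ‖A i j‖ ^ 2 ≥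
      c * ∑ i, ∑ j, (lam i - lam j) ^ 2 / Mmean f (lam i) (lam j) * ‖A i j‖ ^ 2 := by
  rw [ge_iff_le, Finset.mul_sum]
  refine Finset.sum_le_sum fun i _ => ?_
  rw [Finset.mul_sum]
  refine Finset.sum_le_sum fun j _ => ?_
  rw [← mul_assoc]
  refine mul_le_mul_of_nonneg_right ?_ (by positivity)
  have hi := hlam i
  have hj := hlam j
  have hx : 0 < lam i / lam j := div_pos hi hj
  have hfp : 0 < f (lam i / lam j) := hf.2.2.2.1 _ hx
  have h := mul_le_mul_of_nonneg_left (hfg _ hx) hj.le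
  unfold Mmean
  refine le_trans (le_of_eq ?_) h
  generalize f (lam i / lam j) = y at hfp
  field_simp
end
end

section
/- Let f, g : (0,∞) → ℝ be standard-type functions and c > 0 a constant such that g(x) ≥ c·(x−1)²/f(x) for all x > 0. Let D = diag(λ₁,…,λₙ) be a diagonal density matrix with all λᵢ > 0, and let A₁, A₂, …, A_m be self-adjoint n×n complex matrices. Then det([qCov^g_D(Aᵢ,Aⱼ)]_{i,j=1}^m) ≥ det([c·γ^f_D([D,Aᵢ],[D,Aⱼ])]_{i,j=1}^m). -/
open scoped BigOperators ComplexConjugate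

noncomputable section

/-- The quantum `g`-covariance of `A` and `B` with respect to the diagonal density
matrix with eigenvalues `lam`. -/
def qCovC {n : ℕ} (g : ℝ → ℝ) (lam : Fin n → ℝ)
    (A B : Matrix (Fin n) (Fin n) ℂ) : ℂ :=
  (∑ i, ∑ j, (Mmean g (lam i) (lam j) : ℂ) * conj (A i j) * B i j)
    - (∑ i, (lam i : ℂ) * conj (A i i)) * (∑ i, (lam i : ℂ) * B i i)

/-- The quantum `f`-Fisher-information form evaluated at the commutators
`[D,A]`, `[D,B]`, for the diagonal density matrix `D` with eigenvalues `lam`. -/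
def gammaCommC {n : ℕ} (f : ℝ → ℝ) (lam : Fin n → ℝ)
    (A B : Matrix (Fin n) (Fin n) ℂ) : ℂ :=
  ∑ i, ∑ j, (((lam i - lam j) ^ 2 / Mmean f (lam i) (lam j) : ℝ) : ℂ)
      * conj (A i j) * B i j

lemma aux_det_one_add {m : ℕ} (R : Matrix (Fin m) (Fin m) ℝ) (hR : R.PosSemidef) :
    1 ≤ (1 + R).det := by
  have h := hR.isHermitian.spectral_theorem
  set U := hR.isHermitian.eigenvectorUnitary with hU
  set d := hR.isHermitian.eigenvalues with hd
  have hUU : (U : Matrix (Fin m) (Fin m) ℝ) * star (U : Matrix (Fin m) (Fin m) ℝ) = 1 :=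
    Unitary.mul_star_self_of_mem U.2
  have e : (1 + R) = (U : Matrix (Fin m) (Fin m) ℝ) * Matrix.diagonal (fun i => 1 + d i)
      * star (U : Matrix (Fin m) (Fin m) ℝ) := by
    have : Matrix.diagonal (fun i => 1 + d i) = 1 + Matrix.diagonal d := by
      rw [← Matrix.diagonal_one, Matrix.diagonal_add]
    rw [this, mul_add, add_mul, mul_one, hUU]
    congr 1
  have hdet : (U : Matrix (Fin m) (Fin m) ℝ).det * (star (U : Matrix (Fin m) (Fin m) ℝ)).det = 1 := by
    rw [← Matrix.det_mul, hUU, Matrix.det_one]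
  rw [e, Matrix.det_mul, Matrix.det_mul, mul_right_comm, hdet, one_mul, Matrix.det_diagonal]
  refine Finset.one_le_prod ?_
  intro i _
  have := hR.eigenvalues_nonneg i
  simp only [hd]
  linarith

lemma aux_det_le {m : ℕ} (G P : Matrix (Fin m) (Fin m) ℝ) (hG : G.PosSemidef)
    (hP : P.PosSemidef) : G.det ≤ (G + P).det := by
  by_cases h0 : G.det = 0
  · rw [h0]; exact (hG.add hP).det_nonneg
  · obtain ⟨B, hB⟩ : ∃ B : Matrix (Fin m) (Fin m) ℝ, G = B.conjTranspose * B :=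
      by
      open scoped MatrixOrder in
      exact CStarAlgebra.nonneg_iff_eq_star_mul_self.mp hG.nonneg
    have hBd : IsUnit B.det := by
      rw [isUnit_iff_ne_zero]
      intro h
      apply h0
      rw [hB, Matrix.det_mul, h, mul_zero]
    have hBi : B⁻¹ * B = 1 := Matrix.nonsing_inv_mul _ hBd
    have hBi' : B.conjTranspose * B⁻¹.conjTranspose = 1 := by
      rw [← Matrix.conjTranspose_mul, hBi, Matrix.conjTranspose_one]
    have e : G + P = B.conjTranspose * (1 + B⁻¹.conjTranspose * P * B⁻¹) * B := by
      rw [mul_add, add_mul, mul_one, ← hB]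
      congr 1
      calc P = 1 * P * 1 := by simp
        _ = (B.conjTranspose * B⁻¹.conjTranspose) * P * (B⁻¹ * B) := by rw [hBi, hBi']
        _ = _ := by simp only [Matrix.mul_assoc]
    have h1 := aux_det_one_add _ (hP.conjTranspose_mul_mul_same B⁻¹)
    have hG0 := hG.det_nonneg
    have : (G + P).det = G.det * (1 + B⁻¹.conjTranspose * P * B⁻¹).det := by
      rw [e, Matrix.det_mul, Matrix.det_mul, mul_right_comm, ← Matrix.det_mul, ← hB]
    rw [this]
    exact le_mul_of_one_le_right hG0 h1

lemma aux_psd {m : ℕ} {V : Type*} [AddCommGroup V] [Module ℝ V] (A : Fin m → V)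
    (F : V → V → ℝ) (hs : ∀ a b, F a b = F b a) (ha : ∀ a b d, F a (b + d) = F a b + F a d)
    (hm : ∀ (r : ℝ) a b, F a (r • b) = r * F a b) (hp : ∀ a, 0 ≤ F a a) :
    (Matrix.of fun i j => F (A i) (A j)).PosSemidef := by
  let L : V →ₗ[ℝ] V →ₗ[ℝ] ℝ := LinearMap.mk₂ ℝ F
    (fun a b d => by rw [hs, ha, hs d, hs d]) (fun r a b => by rw [hs, hm, hs b]; rfl)
    ha (fun r a b => hm r a b)
  refine Matrix.PosSemidef.of_dotProduct_mulVec_nonneg ?_ ?_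
  · ext i j
    simp [hs (A i) (A j)]
  · intro x
    have h : 0 ≤ L (∑ i, x i • A i) (∑ i, x i • A i) := hp _
    refine le_trans h (le_of_eq ?_)
    symm
    simp only [map_sum, LinearMap.sum_apply, map_smul, LinearMap.smul_apply, dotProduct,
      Matrix.mulVec, Matrix.of_apply, Finset.mul_sum, smul_eq_mul]
    rw [Finset.sum_comm]
    refine Finset.sum_congr rfl fun i _ => Finset.sum_congr rfl fun j _ => ?_
    simp [L]
    ring

lemma gammaRe {n : ℕ} (f : ℝ → ℝ) (lam : Fin n → ℝ) (A B : Matrix (Fin n) (Fin n) ℂ) :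
    (gammaCommC f lam A B).re = ∑ i, ∑ j, (lam i - lam j) ^ 2 / Mmean f (lam i) (lam j) *
      ((A i j).re * (B i j).re + (A i j).im * (B i j).im) := by
  unfold gammaCommC
  simp only [Complex.re_sum, mul_assoc, Complex.re_ofReal_mul]
  simp

lemma qCovRe {n : ℕ} (f : ℝ → ℝ) (lam : Fin n → ℝ) (A B : Matrix (Fin n) (Fin n) ℂ) :
    (qCovC f lam A B).re = ∑ i, ∑ j, Mmean f (lam i) (lam j) *
      ((A i j).re * (B i j).re + (A i j).im * (B i j).im)
      - ((∑ i, lam i * (A i i).re) * (∑ i, lam i * (B i i).re)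
        + (∑ i, lam i * (A i i).im) * (∑ i, lam i * (B i i).im)) := by
  unfold qCovC
  simp only [Complex.sub_re, Complex.mul_re (∑ i, _), Complex.re_sum, Complex.im_sum, mul_assoc,
    Complex.re_ofReal_mul, Complex.im_ofReal_mul]
  simp

lemma aux_cs {n : ℕ} (lam : Fin n → ℝ) (hlam : ∀ i, 0 < lam i) (hsum : ∑ i, lam i = 1)
    (u : Fin n → ℝ) : (∑ i, lam i * u i) * (∑ i, lam i * u i) ≤ ∑ i, lam i * (u i * u i) := by
  have h : 0 ≤ ∑ i, lam i * (u i - ∑ k, lam k * u k) ^ 2 :=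
    Finset.sum_nonneg fun i _ => mul_nonneg (hlam i).le (sq_nonneg _)
  set s := ∑ k, lam k * u k with hs
  have e : ∑ i, lam i * (u i - s) ^ 2
      = ∑ i, lam i * (u i * u i) - 2 * s * (∑ i, lam i * u i) + s ^ 2 * ∑ i, lam i := by
    clear_value s
    rw [Finset.mul_sum, Finset.mul_sum, ← Finset.sum_sub_distrib, ← Finset.sum_add_distrib]
    exact Finset.sum_congr rfl fun i _ => by ring
  rw [e, hsum, ← hs] at h
  nlinarith

theorem det_qCov_ge_det_gammaComm
    {n m : ℕ} (f g : ℝ → ℝ) (hf : StandardType f) (hg : StandardType g)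
    (c : ℝ) (hc : 0 < c)
    (hfg : ∀ x : ℝ, 0 < x → g x ≥ c * (x - 1) ^ 2 / f x)
    (lam : Fin n → ℝ) (hlam : ∀ i, 0 < lam i) (hsum : ∑ i, lam i = 1)
    (A : Fin m → Matrix (Fin n) (Fin n) ℂ) (hA : ∀ k, (A k).IsHermitian) :
    Matrix.det (Matrix.of fun i j => (qCovC g lam (A i) (A j)).re) ≥
      Matrix.det (Matrix.of fun i j => c * (gammaCommC f lam (A i) (A j)).re) := by
  have hfpos := hf.2.2.2.1
  have hg1 := hg.2.2.2.2.1
  have gs : ∀ a b, (gammaCommC f lam a b).re = (gammaCommC f lam b a).re := fun a b => by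
    simp only [gammaRe, mul_comm]
  have qs : ∀ a b, (qCovC g lam a b).re = (qCovC g lam b a).re := fun a b => by
    simp only [qCovRe, mul_comm]
  have ga : ∀ a b d, (gammaCommC f lam a (b + d)).re
      = (gammaCommC f lam a b).re + (gammaCommC f lam a d).re := fun a b d => by
    simp only [gammaCommC, Matrix.add_apply, mul_add, Finset.sum_add_distrib, Complex.add_re]
  have qa : ∀ a b d, (qCovC g lam a (b + d)).re
      = (qCovC g lam a b).re + (qCovC g lam a d).re := fun a b d => by
    simp only [qCovC, Matrix.add_apply, mul_add, Finset.sum_add_distrib, Complex.add_re,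
      Complex.sub_re]
    ring
  have gm : ∀ (r : ℝ) a b, (gammaCommC f lam a (r • b)).re
      = r * (gammaCommC f lam a b).re := fun r a b => by
    simp only [gammaRe, Matrix.smul_apply, Complex.smul_re, Complex.smul_im, smul_eq_mul,
      Finset.mul_sum]
    exact Finset.sum_congr rfl fun i _ => Finset.sum_congr rfl fun j _ => by ring
  have qm : ∀ (r : ℝ) a b, (qCovC g lam a (r • b)).re
      = r * (qCovC g lam a b).re := fun r a b => by
    simp only [qCovRe, Matrix.smul_apply, Complex.smul_re, Complex.smul_im, smul_eq_mul,
      mul_left_comm _ r, ← mul_add, ← Finset.mul_sum]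
    ring
  have hMf : ∀ i j, 0 < Mmean f (lam i) (lam j) := fun i j =>
    mul_pos (hlam j) (hfpos _ (div_pos (hlam i) (hlam j)))
  have hG := aux_psd A (fun a b => c * (gammaCommC f lam a b).re)
    (fun a b => by rw [gs]) (fun a b d => by rw [ga, mul_add])
    (fun r a b => by rw [gm]; ring) (fun a => by
      rw [gammaRe]
      refine mul_nonneg hc.le (Finset.sum_nonneg fun i _ => Finset.sum_nonneg fun j _ => ?_)
      exact mul_nonneg (div_nonneg (sq_nonneg _) (hMf i j).le)
        (add_nonneg (mul_self_nonneg _) (mul_self_nonneg _)))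
  have hw : ∀ i j, c * ((lam i - lam j) ^ 2 / Mmean f (lam i) (lam j))
      ≤ Mmean g (lam i) (lam j) := fun i j => by
    have hj := hlam j
    have hp := hfpos _ (div_pos (hlam i) (hlam j))
    have h := mul_le_mul_of_nonneg_left (hfg _ (div_pos (hlam i) (hlam j))) hj.le
    unfold Mmean
    refine le_trans (le_of_eq ?_) h
    field_simp
  have hP := aux_psd A (fun a b => (qCovC g lam a b).re - c * (gammaCommC f lam a b).re)
    (fun a b => by rw [gs, qs]) (fun a b d => by rw [ga, qa]; ring)
    (fun r a b => by rw [gm, qm]; ring) (fun a => by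
      have hd : ∑ i, lam i * ((a i i).re * (a i i).re + (a i i).im * (a i i).im)
          ≤ ∑ i, ∑ j, (Mmean g (lam i) (lam j)
            - c * ((lam i - lam j) ^ 2 / Mmean f (lam i) (lam j))) *
            ((a i j).re * (a i j).re + (a i j).im * (a i j).im) := by
        refine Finset.sum_le_sum fun i _ => ?_
        refine le_trans (le_of_eq ?_) (Finset.single_le_sum (fun j _ => ?_) (Finset.mem_univ i))
        · simp [Mmean, div_self (hlam i).ne', hg1]
        · exact mul_nonneg (sub_nonneg.2 (hw i j))
            (add_nonneg (mul_self_nonneg _) (mul_self_nonneg _))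
      have h1 := aux_cs lam hlam hsum (fun i => (a i i).re)
      have h2 := aux_cs lam hlam hsum (fun i => (a i i).im)
      simp only [mul_add, Finset.sum_add_distrib, sub_mul, Finset.sum_sub_distrib, mul_assoc,
        ← Finset.mul_sum] at hd
      simp only [qCovRe, gammaRe, mul_add, Finset.sum_add_distrib]
      linarith)
  have := aux_det_le _ _ hG hP
  refine le_trans this (le_of_eq ?_)
  congr 1
  ext i j
  simp
end
end

section
/- Let f : (0,∞) → ℝ be a standard-type function and set f(0) := lim_{t→0+} f(t). Let D = diag(λ₁,…,λₙ) be a diagonal density matrix with all λᵢ > 0, and let A₁, A₂, …, A_m be self-adjoint n×n complex matrices. Then the dynamical uncertainty principle holds: det([Cov_D(Aᵢ,Aⱼ)]_{i,j=1}^m) ≥ det([(f(0)/2)·γ^f_D([D,Aᵢ],[D,Aⱼ])]_{i,j=1}^m), where Cov_D is the symmetrized covariance (the quantum g-covariance for g(x) = (1+x)/2, so M_g(a,b) = (a+b)/2). -/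
open scoped BigOperators ComplexConjugate

noncomputable section

/-- The symmetrized covariance of `A` and `B` with respect to the diagonal density
matrix with eigenvalues `lam`; it is the quantum `g`-covariance for
`g x = (1 + x)/2`, whose mean is the arithmetic mean. -/
def CovC {n : ℕ} (lam : Fin n → ℝ) (A B : Matrix (Fin n) (Fin n) ℂ) : ℂ :=
  (∑ i, ∑ j, (((lam i + lam j) / 2 : ℝ) : ℂ) * conj (A i j) * B i j)
    - (∑ i, (lam i : ℂ) * conj (A i i)) * (∑ i, (lam i : ℂ) * B i i)

open scoped MatrixOrder in
theorem aux_det_le_s5 {m : ℕ} (A B : Matrix (Fin m) (Fin m) ℝ) (hB : B.PosSemidef)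
    (hAB : (A - B).PosSemidef) : B.det ≤ A.det := by
  have hA : A.PosSemidef := by simpa using hAB.add hB
  by_cases h0 : B.det = 0
  · rw [h0]; exact hA.det_nonneg
  obtain ⟨T, hT⟩ := CStarAlgebra.nonneg_iff_eq_star_mul_self.mp hB.nonneg
  rw [Matrix.star_eq_conjTranspose] at hT
  have hTd : T.det ≠ 0 := by
    intro h
    apply h0
    rw [hT, Matrix.det_mul, h, mul_zero]
  have hTu : IsUnit T.det := isUnit_iff_ne_zero.mpr hTd
  have hTT : T * T⁻¹ = 1 := Matrix.mul_nonsing_inv _ hTu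
  have hTT' : (T⁻¹).conjTranspose * T.conjTranspose = 1 := by
    rw [← Matrix.conjTranspose_mul, hTT, Matrix.conjTranspose_one]
  have hdet1 : T.conjTranspose.det = T.det := by
    simp
  have hdB : B.det = T.det * T.det := by rw [hT, Matrix.det_mul, hdet1]
  set P := (T⁻¹).conjTranspose * A * T⁻¹ with hP
  have hPp : P.PosSemidef := hA.conjTranspose_mul_mul_same _
  have hP1 : (P - 1).PosSemidef := by
    have h := hAB.conjTranspose_mul_mul_same T⁻¹
    have e : (T⁻¹).conjTranspose * (A - B) * T⁻¹ = P - 1 := by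
      rw [mul_sub, sub_mul, ← hP]
      congr 1
      rw [hT, ← mul_assoc, hTT', one_mul, hTT]
    rwa [e] at h
  have hge : 1 ≤ P.det := by
    rw [hPp.isHermitian.det_eq_prod_eigenvalues]
    have key : ∀ i, 1 ≤ hPp.isHermitian.eigenvalues i := by
      intro i
      have h1 := hP1.dotProduct_mulVec_nonneg (hPp.isHermitian.eigenvectorBasis i)
      rw [Matrix.sub_mulVec, Matrix.one_mulVec, hPp.isHermitian.mulVec_eigenvectorBasis,
        dotProduct_sub, dotProduct_smul] at h1
      have h2 : star (⇑(hPp.isHermitian.eigenvectorBasis i)) ⬝ᵥ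
          (⇑(hPp.isHermitian.eigenvectorBasis i)) = 1 := by
        have h3 := hPp.isHermitian.eigenvectorBasis.orthonormal.1 i
        have h4 := EuclideanSpace.real_norm_sq_eq (hPp.isHermitian.eigenvectorBasis i)
        rw [h3] at h4
        simp only [dotProduct, Pi.star_apply, star_trivial]
        rw [one_pow] at h4
        rw [h4]
        exact Finset.sum_congr rfl fun j _ => by ring
      rw [h2] at h1
      simp at h1
      linarith
    calc (1 : ℝ) = ∏ i : Fin m, (1 : ℝ) := by simp
      _ ≤ _ := Finset.prod_le_prod (fun _ _ => zero_le_one) (fun i _ => by simpa using key i)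
  have hA2 : A.det = T.det * T.det * P.det := by
    have : A = T.conjTranspose * P * T := by
      rw [hP]
      have h5 : T.conjTranspose * (T⁻¹).conjTranspose = 1 := by
        rw [← Matrix.conjTranspose_mul, Matrix.nonsing_inv_mul _ hTu, Matrix.conjTranspose_one]
      calc A = (T.conjTranspose * (T⁻¹).conjTranspose) * A * (T⁻¹ * T) := by
            rw [h5, Matrix.nonsing_inv_mul _ hTu, one_mul, mul_one]
        _ = _ := by simp only [mul_assoc]
    rw [this, Matrix.det_mul, Matrix.det_mul, hdet1]; ring
  rw [hA2, hdB]
  nlinarith [mul_self_nonneg T.det]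

/-- the real Gram matrix of a complex vector -/
def auxR {m : ℕ} (z : Fin m → ℂ) : Matrix (Fin m) (Fin m) ℝ :=
  Matrix.of fun k l => (conj (z k) * z l).re

theorem auxR_psd {m : ℕ} (z : Fin m → ℂ) : (auxR z).PosSemidef := by
  have h := (Matrix.posSemidef_vecMulVec_self_star (fun k => (z k).re)).add
    (Matrix.posSemidef_vecMulVec_self_star (fun k => (z k).im))
  convert h using 1
  ext k l
  simp [auxR, Matrix.vecMulVec_apply]

theorem aux_weight (f : ℝ → ℝ) (hf : StandardType f) (f0 : ℝ)
    (hf0 : Filter.Tendsto f (nhdsWithin 0 (Set.Ioi 0)) (nhds f0)) :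
    0 ≤ f0 ∧ ∀ a b : ℝ, 0 < a → 0 < b → 0 < Mmean f a b ∧
      f0 / 2 * ((a - b) ^ 2 / Mmean f a b) ≤ (a + b) / 2 := by
  obtain ⟨_, hmono, _, hpos, _, hsymm⟩ := hf
  have h0 : 0 ≤ f0 := by
    refine ge_of_tendsto hf0 ?_
    filter_upwards [self_mem_nhdsWithin] with t ht
    exact (hpos t ht).le
  have hle : ∀ x, 0 < x → f0 ≤ f x := by
    intro x hx
    refine le_of_tendsto hf0 ?_
    filter_upwards [Ioo_mem_nhdsGT hx] with t ht
    exact hmono ht.1 hx ht.2.le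
  refine ⟨h0, fun a b ha hb => ?_⟩
  have hM : 0 < Mmean f a b := mul_pos hb (hpos _ (div_pos ha hb))
  refine ⟨hM, ?_⟩
  have h1 : f0 * b ≤ Mmean f a b := by
    unfold Mmean
    have := hle _ (div_pos ha hb)
    nlinarith
  have h2 : f0 * a ≤ Mmean f a b := by
    have e : Mmean f a b = a * f (b / a) := by
      unfold Mmean
      rw [hsymm _ (div_pos ha hb), one_div_div]
      field_simp
    rw [e]
    have := hle _ (div_pos hb ha)
    nlinarith
  have h3 : f0 * (a - b) ^ 2 ≤ (a + b) * Mmean f a b := by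
    rcases le_total a b with h | h
    · have : (a - b) ^ 2 ≤ (a + b) * b := by nlinarith [mul_pos ha hb]
      nlinarith [mul_le_mul_of_nonneg_left this h0, mul_le_mul_of_nonneg_left h1 (add_pos ha hb).le]
    · have : (a - b) ^ 2 ≤ (a + b) * a := by nlinarith [mul_pos ha hb]
      nlinarith [mul_le_mul_of_nonneg_left this h0, mul_le_mul_of_nonneg_left h2 (add_pos ha hb).le]
  have h4 : f0 * ((a - b) ^ 2 / Mmean f a b) ≤ a + b := by
    rw [← mul_div_assoc, div_le_iff₀ hM]; exact h3
  linarith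

theorem aux_re {n : ℕ} (w : Fin n → Fin n → ℝ) (A B : Matrix (Fin n) (Fin n) ℂ) :
    (∑ i, ∑ j, ((w i j : ℝ) : ℂ) * conj (A i j) * B i j).re =
      ∑ i, ∑ j, w i j * (conj (A i j) * B i j).re := by
  simp only [Complex.re_sum, mul_assoc, Complex.re_ofReal_mul]

theorem aux_var {n : ℕ} (lam : Fin n → ℝ) (hsum : ∑ i, lam i = 1) (a b : Fin n → ℂ) :
    (∑ i, lam i * (conj (a i - ∑ j, (lam j : ℂ) * a j) * (b i - ∑ j, (lam j : ℂ) * b j)).re) =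
    (∑ i, lam i * (conj (a i) * b i).re) -
      ((∑ i, (lam i : ℂ) * conj (a i)) * (∑ i, (lam i : ℂ) * b i)).re := by
  have hs : ∑ i, (lam i : ℂ) = 1 := by exact_mod_cast congrArg (fun x : ℝ => (x : ℂ)) hsum
  have hc : ∑ i, (lam i : ℂ) * conj (a i) = conj (∑ j, (lam j : ℂ) * a j) := by
    simp [map_sum]
  have key : (∑ i, (lam i : ℂ) *
      (conj (a i - ∑ j, (lam j : ℂ) * a j) * (b i - ∑ j, (lam j : ℂ) * b j))) =
      (∑ i, (lam i : ℂ) * (conj (a i) * b i)) -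
      ((∑ i, (lam i : ℂ) * conj (a i)) * (∑ i, (lam i : ℂ) * b i)) := by
    set α := ∑ j, (lam j : ℂ) * a j
    set β := ∑ j, (lam j : ℂ) * b j with hβ
    have e : ∀ i, (lam i : ℂ) * (conj (a i - α) * (b i - β)) =
        (lam i : ℂ) * (conj (a i) * b i) - ((lam i : ℂ) * conj (a i)) * β
          - conj α * ((lam i : ℂ) * b i) + (lam i : ℂ) * (conj α * β) := by
      intro i; rw [map_sub]; ring
    simp only [e, Finset.sum_add_distrib, Finset.sum_sub_distrib, ← Finset.sum_mul,
      ← Finset.mul_sum, hs, hc]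
    rw [← hβ]; ring
  have := congrArg Complex.re key
  simpa only [Complex.re_sum, Complex.sub_re, Complex.re_ofReal_mul] using this

theorem dynamical_uncertainty_principle
    {n m : ℕ} (f : ℝ → ℝ) (hf : StandardType f) (f0 : ℝ)
    (hf0 : Filter.Tendsto f (nhdsWithin 0 (Set.Ioi 0)) (nhds f0))
    (lam : Fin n → ℝ) (hlam : ∀ i, 0 < lam i) (hsum : ∑ i, lam i = 1)
    (A : Fin m → Matrix (Fin n) (Fin n) ℂ) (hA : ∀ k, (A k).IsHermitian) :
    Matrix.det (Matrix.of fun i j => (CovC lam (A i) (A j)).re) ≥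
      Matrix.det (Matrix.of fun i j => f0 / 2 * (gammaCommC f lam (A i) (A j)).re) := by
  obtain ⟨h0, hw⟩ := aux_weight f hf f0 hf0
  apply aux_det_le_s5
  · have e : (Matrix.of fun i j => f0 / 2 * (gammaCommC f lam (A i) (A j)).re) =
        ∑ i, ∑ j, (f0 / 2 * ((lam i - lam j) ^ 2 / Mmean f (lam i) (lam j))) •
          auxR (fun k => A k i j) := by
      ext k l
      simp only [Matrix.of_apply, gammaCommC, aux_re, Matrix.sum_apply, Matrix.smul_apply, auxR,
        smul_eq_mul]
      simp only [Finset.mul_sum, mul_assoc]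
    rw [e]
    refine Matrix.posSemidef_sum _ fun i _ => Matrix.posSemidef_sum _ fun j _ =>
      (auxR_psd _).smul ?_
    have := (hw _ _ (hlam i) (hlam j)).1
    positivity
  · have e : (Matrix.of fun i j => (CovC lam (A i) (A j)).re) -
        (Matrix.of fun i j => f0 / 2 * (gammaCommC f lam (A i) (A j)).re) =
        (∑ i, ∑ j, ((lam i + lam j) / 2 - (if i = j then lam i else 0) -
          f0 / 2 * ((lam i - lam j) ^ 2 / Mmean f (lam i) (lam j))) •
          auxR (fun k => A k i j)) +
        ∑ i, lam i • auxR (fun k => A k i i - ∑ j, (lam j : ℂ) * A k j j) := by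
      ext k l
      simp only [Matrix.of_apply, Matrix.sub_apply, Matrix.add_apply, gammaCommC, CovC,
        Complex.sub_re, aux_re, Matrix.sum_apply, Matrix.smul_apply, auxR, smul_eq_mul]
      rw [aux_var lam hsum (fun i => A k i i) (fun i => A l i i)]
      simp only [sub_mul, Finset.sum_sub_distrib, ite_mul, zero_mul, Finset.sum_ite_eq,
        Finset.mem_univ, if_true, Finset.mul_sum, mul_assoc]
      ring
    rw [e]
    refine Matrix.PosSemidef.add (Matrix.posSemidef_sum _ fun i _ =>
      Matrix.posSemidef_sum _ fun j _ => (auxR_psd _).smul ?_)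
      (Matrix.posSemidef_sum _ fun i _ => (auxR_psd _).smul (hlam i).le)
    by_cases hij : i = j
    · subst hij; simp
    · have := (hw _ _ (hlam i) (hlam j)).2
      simp only [hij, if_false]
      linarith
end
end

section
/- Let f : (0,∞) → ℝ be a standard-type function and set f(0) := lim_{t→0+} f(t). Then f(x) ≥ f(0)·|x−1| for every x > 0. -/
open scoped BigOperators

noncomputable section

theorem standard_ge_f0_mul_abs
    (f : ℝ → ℝ) (hf : StandardType f) (f0 : ℝ)
    (hf0 : Filter.Tendsto f (nhdsWithin 0 (Set.Ioi 0)) (nhds f0)) :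
    ∀ x : ℝ, 0 < x → f x ≥ f0 * |x - 1| := by
  intro x hx
  obtain ⟨-, hm, -, hpos, -, hs⟩ := hf
  have hle : ∀ y : ℝ, 0 < y → f0 ≤ f y := by
    intro y hy
    refine le_of_tendsto hf0 ?_
    filter_upwards [Ioo_mem_nhdsGT hy] with t ht
    exact hm ht.1 hy ht.2.le
  have h0 : 0 ≤ f0 := by
    refine ge_of_tendsto hf0 ?_
    filter_upwards [self_mem_nhdsWithin] with t ht
    exact (hpos t ht).le
  have h1 := hle x hx
  have h2 : x * f0 ≤ f x := by
    rw [hs x hx]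
    exact mul_le_mul_of_nonneg_left (hle (1 / x) (by positivity)) hx.le
  rcases abs_cases (x - 1) with ⟨h, _⟩ | ⟨h, _⟩ <;> rw [h] <;> nlinarith
end
end

section
/- Let f, g : (0,∞) → ℝ be standard-type functions and set f(0) := lim_{t→0+} f(t) and g(0) := lim_{t→0+} g(t). Then f(x)·g(x) ≥ f(0)·g(0)·(x−1)² for every x > 0. -/
open scoped BigOperators

noncomputable section

theorem st_aux (f : ℝ → ℝ) (hf : StandardType f) (f0 : ℝ)
    (hf0 : Filter.Tendsto f (nhdsWithin 0 (Set.Ioi 0)) (nhds f0)) :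
    0 ≤ f0 ∧ ∀ x : ℝ, 0 < x → f0 * |x - 1| ≤ f x := by
  obtain ⟨_, hm, _, hp, _, hs⟩ := hf
  have h0 : 0 ≤ f0 := by
    refine ge_of_tendsto hf0 ?_
    filter_upwards [self_mem_nhdsWithin] with t ht
    exact (hp t ht).le
  have h1 : ∀ x : ℝ, 0 < x → f0 ≤ f x := by
    intro x hx
    refine le_of_tendsto hf0 ?_
    filter_upwards [Ioo_mem_nhdsGT hx] with t ht
    exact hm ht.1 hx ht.2.le
  refine ⟨h0, fun x hx => ?_⟩
  have h2 := h1 x hx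
  have h3 : x * f0 ≤ f x := by
    rw [hs x hx]
    exact mul_le_mul_of_nonneg_left (h1 _ (by positivity)) hx.le
  rcases abs_cases (x - 1) with h | h <;> rw [h.1] <;> nlinarith [mul_nonneg h0 hx.le]

theorem mul_standard_ge_f0_g0_sq
    (f g : ℝ → ℝ) (hf : StandardType f) (hg : StandardType g)
    (f0 g0 : ℝ)
    (hf0 : Filter.Tendsto f (nhdsWithin 0 (Set.Ioi 0)) (nhds f0))
    (hg0 : Filter.Tendsto g (nhdsWithin 0 (Set.Ioi 0)) (nhds g0)) :
    ∀ x : ℝ, 0 < x → f x * g x ≥ f0 * g0 * (x - 1) ^ 2 := by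
  intro x hx
  obtain ⟨h0, h1⟩ := st_aux f hf f0 hf0
  obtain ⟨k0, k1⟩ := st_aux g hg g0 hg0
  have h := mul_le_mul (h1 x hx) (k1 x hx) (by positivity) (hf.2.2.2.1 x hx).le
  have e : f0 * |x - 1| * (g0 * |x - 1|) = f0 * g0 * (x - 1) ^ 2 := by
    rw [← sq_abs (x - 1)]; ring
  rw [e] at h
  exact h
end
end

section
/- Let f, g : (0,∞) → ℝ be standard-type functions with f(0) := lim_{t→0+} f(t) > 0 and g(0) := lim_{t→0+} g(t) > 0. Let D = diag(λ₁,…,λₙ) be a diagonal density matrix with all λᵢ > 0, and let A₁, A₂, …, A_m be self-adjoint n×n complex matrices. Then det([qCov^g_D(Aᵢ,Aⱼ)]_{i,j=1}^m) ≥ det([f(0)·g(0)·γ^f_D([D,Aᵢ],[D,Aⱼ])]_{i,j=1}^m). -/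
open scoped BigOperators ComplexConjugate

noncomputable section

theorem aux_one_le_det {m : ℕ} (B : Matrix (Fin m) (Fin m) ℝ) (hB : B.PosSemidef) :
    1 ≤ (1 + B).det := by
  have h := Matrix.eval_charpoly B (-1)
  rw [hB.1.charpoly_eq, Polynomial.eval_prod] at h
  have h2 : Matrix.scalar (Fin m) (-1 : ℝ) - B = -(1 + B) := by
    rw [map_neg, map_one]; abel
  rw [h2, Matrix.det_neg] at h
  have h3 : ∏ i, Polynomial.eval (-1 : ℝ) (Polynomial.X - Polynomial.C ((hB.1.eigenvalues i : ℝ)))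
      = (-1) ^ Fintype.card (Fin m) * ∏ i, (1 + hB.1.eigenvalues i) := by
    rw [← Finset.card_univ, ← Finset.prod_const, ← Finset.prod_mul_distrib]
    refine Finset.prod_congr rfl fun i _ => ?_
    simp
    ring
  have h4 : (1 + B).det = ∏ i, (1 + hB.1.eigenvalues i) := by
    have h5 := h3.symm.trans h
    exact (mul_left_cancel₀ (pow_ne_zero _ (by norm_num)) h5).symm
  rw [h4]
  have : ∏ i : Fin m, (1 : ℝ) ≤ ∏ i, (1 + hB.1.eigenvalues i) :=
    Finset.prod_le_prod (fun _ _ => zero_le_one)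
      (fun i _ => by have := hB.eigenvalues_nonneg i; linarith)
  simpa using this

open scoped MatrixOrder ComplexOrder in
theorem aux_exists_sq {m : ℕ} (B : Matrix (Fin m) (Fin m) ℝ) (hB : B.PosSemidef) :
    ∃ C : Matrix (Fin m) (Fin m) ℝ, B = C.conjTranspose * C := by
  obtain ⟨C, hC⟩ := CStarAlgebra.nonneg_iff_eq_star_mul_self.mp hB.nonneg
  exact ⟨C, hC⟩

open scoped MatrixOrder ComplexOrder in
theorem aux_det_mono {m : ℕ} (Q R : Matrix (Fin m) (Fin m) ℝ) (hQ : Q.PosSemidef)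
    (hR : R.PosSemidef) : Q.det ≤ (Q + R).det := by
  by_cases h0 : Q.det = 0
  · rw [h0]; exact (hQ.add hR).det_nonneg
  · have hu : IsUnit Q.det := isUnit_iff_ne_zero.mpr h0
    obtain ⟨C, hC⟩ := aux_exists_sq Q⁻¹ hQ.inv
    have e : Q + R = Q * (1 + C.conjTranspose * (C * R)) := by
      rw [← Matrix.mul_assoc, ← hC, Matrix.mul_add, ← Matrix.mul_assoc,
        Matrix.mul_nonsing_inv _ hu, Matrix.mul_one, Matrix.one_mul]
    rw [e, Matrix.det_mul, Matrix.det_one_add_mul_comm]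
    have h1 := aux_one_le_det _ (hR.mul_mul_conjTranspose_same C)
    exact le_mul_of_one_le_right hQ.det_nonneg h1

theorem aux_gram {m n : ℕ} (c : Fin n → Fin n → ℝ) (hc : ∀ i j, 0 ≤ c i j)
    (T : Fin m → Matrix (Fin n) (Fin n) ℂ) :
    (Matrix.of fun k l => ∑ i, ∑ j, c i j * (conj (T k i j) * T l i j).re).PosSemidef := by
  have e : (Matrix.of fun k l => ∑ i, ∑ j, c i j * (conj (T k i j) * T l i j).re)
      = ∑ i, ∑ j, c i j • (Matrix.vecMulVec (fun k => (T k i j).re) (star fun k => (T k i j).re)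
        + Matrix.vecMulVec (fun k => (T k i j).im) (star fun k => (T k i j).im)) := by
    ext k l
    simp [Matrix.sum_apply, Matrix.vecMulVec_apply, mul_add]
  rw [e]
  refine Matrix.posSemidef_sum _ fun i _ => Matrix.posSemidef_sum _ fun j _ => ?_
  exact ((Matrix.posSemidef_vecMulVec_self_star _).add
    (Matrix.posSemidef_vecMulVec_self_star _)).smul (hc i j)

theorem aux_f0_le (f : ℝ → ℝ) (hf : StandardType f) (f0 : ℝ)
    (hf0 : Filter.Tendsto f (nhdsWithin 0 (Set.Ioi 0)) (nhds f0)) (t : ℝ) (ht : 0 < t) :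
    f0 ≤ f t := by
  refine le_of_tendsto hf0 ?_
  filter_upwards [Ioo_mem_nhdsGT ht] with s hs
  exact hf.2.1 hs.1 ht hs.2.le

theorem aux_mean_ge (f : ℝ → ℝ) (hf : StandardType f) (f0 : ℝ)
    (hf0 : Filter.Tendsto f (nhdsWithin 0 (Set.Ioi 0)) (nhds f0)) (a b : ℝ) (ha : 0 < a)
    (hb : 0 < b) : f0 * a ≤ Mmean f a b ∧ f0 * b ≤ Mmean f a b := by
  unfold Mmean
  have h1 := aux_f0_le f hf f0 hf0 (a / b) (by positivity)
  have h2 := aux_f0_le f hf f0 hf0 (1 / (a / b)) (by positivity)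
  constructor
  · rw [hf.2.2.2.2.2 (a / b) (by positivity)]
    have : b * (a / b * f (1 / (a / b))) = f (1 / (a / b)) * a := by field_simp
    rw [this]
    gcongr
  · rw [mul_comm]; gcongr

theorem aux_scalar (f g : ℝ → ℝ) (hf : StandardType f) (hg : StandardType g)
    (f0 g0 : ℝ)
    (hf0 : Filter.Tendsto f (nhdsWithin 0 (Set.Ioi 0)) (nhds f0))
    (hg0 : Filter.Tendsto g (nhdsWithin 0 (Set.Ioi 0)) (nhds g0))
    (hf0pos : 0 < f0) (hg0pos : 0 < g0) (a b : ℝ) (ha : 0 < a) (hb : 0 < b) :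
    0 ≤ f0 * g0 * ((a - b) ^ 2 / Mmean f a b) ∧
    f0 * g0 * ((a - b) ^ 2 / Mmean f a b) ≤ Mmean g a b := by
  obtain ⟨h1, h2⟩ := aux_mean_ge f hf f0 hf0 a b ha hb
  obtain ⟨h3, h4⟩ := aux_mean_ge g hg g0 hg0 a b ha hb
  have hp : 0 < Mmean f a b := lt_of_lt_of_le (by positivity) h1
  refine ⟨by positivity, ?_⟩
  rw [← mul_div_assoc, div_le_iff₀ hp]
  rcases le_total a b with h | h
  · have := mul_le_mul h4 h2 (by positivity) (le_trans (by positivity) h4)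
    have h5 : (a - b) ^ 2 ≤ b ^ 2 := by nlinarith
    have h6 : f0 * g0 * (a - b) ^ 2 ≤ f0 * g0 * b ^ 2 := by gcongr
    nlinarith
  · have := mul_le_mul h3 h1 (by positivity) (le_trans (by positivity) h3)
    have h5 : (a - b) ^ 2 ≤ a ^ 2 := by nlinarith
    have h6 : f0 * g0 * (a - b) ^ 2 ≤ f0 * g0 * a ^ 2 := by gcongr
    nlinarith

/-- the centred matrix -/
def auxCent {n : ℕ} (lam : Fin n → ℝ) (A : Matrix (Fin n) (Fin n) ℂ) :
    Matrix (Fin n) (Fin n) ℂ :=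
  fun i j => A i j - if i = j then ∑ k, (lam k : ℂ) * A k k else 0

theorem aux_gamma {n : ℕ} (f : ℝ → ℝ) (lam : Fin n → ℝ) (c : ℝ)
    (A B : Matrix (Fin n) (Fin n) ℂ) :
    c * (gammaCommC f lam A B).re = ∑ i, ∑ j,
      (c * ((lam i - lam j) ^ 2 / Mmean f (lam i) (lam j)))
        * (conj (auxCent lam A i j) * auxCent lam B i j).re := by
  unfold gammaCommC
  rw [Complex.re_sum, Finset.mul_sum]
  refine Finset.sum_congr rfl fun i _ => ?_
  rw [Complex.re_sum, Finset.mul_sum]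
  refine Finset.sum_congr rfl fun j _ => ?_
  by_cases h : i = j
  · subst h; simp
  · rw [mul_assoc (Complex.ofReal _), Complex.re_ofReal_mul]
    simp only [auxCent, if_neg h, sub_zero]
    ring

theorem aux_qcov {n : ℕ} (g : ℝ → ℝ) (hg : StandardType g) (lam : Fin n → ℝ)
    (hlam : ∀ i, 0 < lam i) (hsum : ∑ i, lam i = 1)
    (A B : Matrix (Fin n) (Fin n) ℂ) :
    (qCovC g lam A B).re = ∑ i, ∑ j,
      Mmean g (lam i) (lam j) * (conj (auxCent lam A i j) * auxCent lam B i j).re := by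
  have key : qCovC g lam A B = ∑ i, ∑ j,
      (Mmean g (lam i) (lam j) : ℂ) * (conj (auxCent lam A i j) * auxCent lam B i j) := by
    have hM : ∀ i, Mmean g (lam i) (lam i) = lam i := fun i => by
      unfold Mmean; rw [div_self (hlam i).ne', hg.2.2.2.2.1, mul_one]
    have hs : ∑ i, (lam i : ℂ) = 1 := by exact_mod_cast hsum
    set a : ℂ := ∑ k, (lam k : ℂ) * A k k with ha
    set b : ℂ := ∑ k, (lam k : ℂ) * B k k with hb
    have hca : ∑ i, (lam i : ℂ) * conj (A i i) = conj a := by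
      rw [ha, map_sum]; simp
    have e : ∀ i j, (Mmean g (lam i) (lam j) : ℂ) * (conj (auxCent lam A i j) * auxCent lam B i j)
        = (Mmean g (lam i) (lam j) : ℂ) * conj (A i j) * B i j
          + if i = j then (lam i : ℂ) * (conj a * b) - conj a * ((lam i : ℂ) * B i i)
            - ((lam i : ℂ) * conj (A i i)) * b else 0 := by
      intro i j
      by_cases h : i = j
      · subst h
        simp only [auxCent, if_true, hM, ← ha, ← hb, map_sub]
        ring
      · simp only [auxCent, if_neg h, sub_zero, add_zero]; ring
    simp only [e, Finset.sum_add_distrib, Finset.sum_ite_eq, Finset.mem_univ, if_true,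
      Finset.sum_sub_distrib, ← Finset.sum_mul, ← Finset.mul_sum, hs, hca]
    unfold qCovC
    rw [hca, ← hb]
    ring
  rw [key, Complex.re_sum]
  refine Finset.sum_congr rfl fun i _ => ?_
  rw [Complex.re_sum]
  refine Finset.sum_congr rfl fun j _ => ?_
  rw [Complex.re_ofReal_mul]

theorem det_qCov_ge_det_f0_g0_gammaComm
    {n m : ℕ} (f g : ℝ → ℝ) (hf : StandardType f) (hg : StandardType g)
    (f0 g0 : ℝ)
    (hf0 : Filter.Tendsto f (nhdsWithin 0 (Set.Ioi 0)) (nhds f0))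
    (hg0 : Filter.Tendsto g (nhdsWithin 0 (Set.Ioi 0)) (nhds g0))
    (hf0pos : 0 < f0) (hg0pos : 0 < g0)
    (lam : Fin n → ℝ) (hlam : ∀ i, 0 < lam i) (hsum : ∑ i, lam i = 1)
    (A : Fin m → Matrix (Fin n) (Fin n) ℂ) (hA : ∀ k, (A k).IsHermitian) :
    Matrix.det (Matrix.of fun i j => (qCovC g lam (A i) (A j)).re) ≥
      Matrix.det (Matrix.of fun i j => f0 * g0 * (gammaCommC f lam (A i) (A j)).re) := by
  have hS := fun i j => aux_scalar f g hf hg f0 g0 hf0 hg0 hf0pos hg0pos (lam i) (lam j)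
    (hlam i) (hlam j)
  have hQ := aux_gram _ (fun i j => (hS i j).1) (fun k => auxCent lam (A k))
  have hR := aux_gram _ (fun i j => sub_nonneg.mpr (hS i j).2) (fun k => auxCent lam (A k))
  have h := aux_det_mono _ _ hQ hR
  rw [ge_iff_le]
  convert h using 2
  · ext k l
    exact aux_gamma f lam (f0 * g0) (A k) (A l)
  · ext k l
    simp only [Matrix.of_apply, Matrix.add_apply]
    rw [aux_qcov g hg lam hlam hsum, ← Finset.sum_add_distrib]
    refine Finset.sum_congr rfl fun i _ => ?_
    rw [← Finset.sum_add_distrib]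
    refine Finset.sum_congr rfl fun j _ => ?_
    ring
end
end

section
/- Let f, g : (0,∞) → ℝ be standard-type functions and c > 0 a constant such that f(x)·g(x) ≥ c·(x−1)² for all x > 0. Then the strict inequality f(x)·g(x) > c·(x−1)² holds for all x > 0. -/
open scoped BigOperators

noncomputable section

theorem StandardType.aux {f : ℝ → ℝ} (hf : StandardType f) {x y a b : ℝ} (hy : 0 < y)
    (ha : 0 < a) (hb : 0 < b) (hab : a + b = 1) (hx : a * y + b = x) :
    a * f y + b ≤ f x := by
  obtain ⟨-, -, h, -, h1, -⟩ := hf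
  have := h.2 (x := y) (y := 1) hy (by simp) ha.le hb.le hab
  simp only [smul_eq_mul, mul_one, h1, hx] at this
  exact this

theorem aux_lt_one (f g : ℝ → ℝ) (hf : StandardType f) (hg : StandardType g)
    (c : ℝ) (hfg : ∀ x : ℝ, 0 < x → f x * g x ≥ c * (x - 1) ^ 2)
    (x : ℝ) (hx : 0 < x) (hx1 : x < 1) : f x * g x > c * (x - 1) ^ 2 := by
  have hy : 0 < x / 2 := by linarith
  have hd : 0 < 1 - x / 2 := by linarith
  obtain ⟨a, ha⟩ : ∃ a, a = (1 - x) / (1 - x / 2) := ⟨_, rfl⟩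
  obtain ⟨b, hb⟩ : ∃ b, b = (x / 2) / (1 - x / 2) := ⟨_, rfl⟩
  have ha0 : 0 < a := by rw [ha]; exact div_pos (by linarith) hd
  have hb0 : 0 < b := by rw [hb]; exact div_pos hy hd
  have had : a * (1 - x / 2) = 1 - x := by rw [ha]; exact div_mul_cancel₀ _ hd.ne'
  have hbd : b * (1 - x / 2) = x / 2 := by rw [hb]; exact div_mul_cancel₀ _ hd.ne'
  have hab : a + b = 1 := by
    apply mul_right_cancel₀ hd.ne'
    linarith
  have hax : a * (x / 2) + b = x := by linarith
  have h1 := hf.aux hy ha0 hb0 hab hax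
  have h2 := hg.aux hy ha0 hb0 hab hax
  have hF := hf.2.2.2.1 _ hy
  have hG := hg.2.2.2.1 _ hy
  have h3 := hfg _ hy
  have h4 : (a * f (x / 2) + b) * (a * g (x / 2) + b) ≤ f x * g x := by
    have := hf.2.2.2.1 _ hx
    exact mul_le_mul h1 h2 (by positivity) this.le
  have h5 : a ^ 2 * (c * (x / 2 - 1) ^ 2) ≤ a ^ 2 * (f (x / 2) * g (x / 2)) :=
    mul_le_mul_of_nonneg_left h3 (by positivity)
  have h6 : a ^ 2 * (c * (x / 2 - 1) ^ 2) = c * (x - 1) ^ 2 := by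
    have : a ^ 2 * (c * (x / 2 - 1) ^ 2) = c * (a * (1 - x / 2)) ^ 2 := by ring
    rw [this, had]; ring
  have h7 : 0 < a * b * (f (x / 2) + g (x / 2)) + b ^ 2 := by positivity
  nlinarith

theorem mul_standard_gt_of_ge
    (f g : ℝ → ℝ) (hf : StandardType f) (hg : StandardType g)
    (c : ℝ) (hc : 0 < c)
    (hfg : ∀ x : ℝ, 0 < x → f x * g x ≥ c * (x - 1) ^ 2) :
    ∀ x : ℝ, 0 < x → f x * g x > c * (x - 1) ^ 2 := by
  intro x hx
  rcases lt_trichotomy x 1 with h | h | h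
  · exact aux_lt_one f g hf hg c hfg x hx h
  · subst h
    rw [hf.2.2.2.2.1, hg.2.2.2.2.1]; norm_num
  · have h1 := aux_lt_one f g hf hg c hfg (1 / x) (by positivity) (by
      rw [div_lt_one hx]; exact h)
    rw [hf.2.2.2.2.2 x hx, hg.2.2.2.2.2 x hx]
    have h2 : c * (x - 1) ^ 2 = x ^ 2 * (c * (1 / x - 1) ^ 2) := by
      field_simp; ring
    have h3 := mul_lt_mul_of_pos_left h1 (pow_pos hx 2)
    rw [h2]
    calc _ < _ := h3
      _ = _ := by ring
end
end
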